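/- Conserved quantities as Hamiltonians: under these hypotheses, for every 1 ≤ m ≤ r and every n ∈ ℤ, C_m·M_n − M_n·C_m = (q−1)·Σ_{j=1}^{m} (−1)^j·C_{m-j}·M_{n+j}, where M_n := M_{1,n}. -/

import Mathlib

/-- ξ_{α,n} := M_{α,n} · M_{α,n+1}⁻¹ -/
def xiv {R : Type*} [Ring R] (M Mi : ℕ → ℤ → R) (α : ℕ) (n : ℤ) : R :=
  M α n * Mi α (n + 1)

/-- ξ_{α,n}⁻¹ = M_{α,n+1} · M_{α,n}⁻¹ -/
def xivInv {R : Type*} [Ring R] (M Mi : ℕ → ℤ → R) (α : ℕ) (n : ℤ) : R :=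
  M α (n + 1) * Mi α n

/-- x_{α,n} := ξ_{α,n}⁻¹ · ξ_{α-1,n} -/
def xv {R : Type*} [Ring R] (M Mi : ℕ → ℤ → R) (α : ℕ) (n : ℤ) : R :=
  xivInv M Mi α n * xiv M Mi (α - 1) n

/-- The Miura coefficient C_{m,n} = Σ_{r+1 ≥ α₁ > ⋯ > α_m ≥ 1}
∏_{j=1}^m x_{α_j, n+(r+1-α_j)-(j-1)} (ordered product, j increasing left to right). -/
def CMiura {R : Type*} [Ring R] (M Mi : ℕ → ℤ → R) (r : ℕ) (m : ℕ) (n : ℤ) : R :=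
  ∑ S ∈ Finset.powersetCard m (Finset.Icc 1 (r + 1)),
    (((S.sort (· ≤ ·)).reverse.zipIdx.map Prod.swap).map
      (fun ji => xv M Mi ji.2 (n + ((r : ℤ) + 1 - (ji.2 : ℤ)) - (ji.1 : ℤ)))).prod


/-- Recursive form of the Miura coefficients. -/
def PP {R : Type*} [Ring R] (X : ℕ → ℤ → R) : ℕ → ℕ → ℤ → R
  | 0, 0, _ => 1
  | 0, _ + 1, _ => 0
  | a + 1, 0, n => PP X a 0 (n + 1)
  | a + 1, m + 1, n => PP X a (m + 1) (n + 1) + X (a + 1) n * PP X a m n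

theorem PP_zero {R : Type*} [Ring R] (X : ℕ → ℤ → R) (a : ℕ) (n : ℤ) : PP X a 0 n = 1 := by
  induction a generalizing n with
  | zero => rfl
  | succ a ih => rw [PP, ih]

theorem PP_succ {R : Type*} [Ring R] (X : ℕ → ℤ → R) (a m : ℕ) (n : ℤ) :
    PP X (a + 1) (m + 1) n = PP X a (m + 1) (n + 1) + X (a + 1) n * PP X a m n := by
  rw [PP]

theorem PP_conserved {R : Type*} [Ring R] (X c : ℕ → ℤ → R) (N : ℕ)
    (h1 : ∀ n, X 1 n - c 1 n = X 1 (n + 1))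
    (h2 : ∀ a n, a + 2 ≤ N → X (a + 2) n - c (a + 2) n = X (a + 2) (n + 1) - c (a + 1) (n + 1))
    (h3 : ∀ a n, a + 2 ≤ N → X (a + 2) (n + 1) * c (a + 1) n = c (a + 1) (n + 1) * X (a + 1) n)
    (a m : ℕ) (n : ℤ) (ha : a + 1 ≤ N) :
    PP X (a + 1) (m + 1) (n + 1) = PP X (a + 1) (m + 1) n - c (a + 1) n * PP X a m n := by
  induction a generalizing m n with
  | zero =>
    cases m with
    | zero => simp [PP, ← h1]
    | succ m => simp [PP]
  | succ a ih =>
    have e2 := h2 a n ha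
    have e3 := h3 a n ha
    have i1 := ih m (n + 1) (by omega)
    cases m with
    | zero =>
      rw [PP_succ, i1, PP_succ X (a + 1) 0 n, PP_zero, PP_zero, PP_zero]
      have : X (a + 1 + 1) (n + 1) = X (a + 2) n - c (a + 2) n + c (a + 1) (n + 1) := by
        rw [e2]; abel
      rw [this]
      simp only [mul_one]
      abel
    | succ m =>
      have i2 := ih m n (by omega)
      rw [PP_succ, i1, i2, PP_succ X (a + 1) (m + 1) n]
      have e : c (a + 2) n = X (a + 2) n - X (a + 2) (n + 1) + c (a + 1) (n + 1) := by
        have := e2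
        rw [sub_eq_iff_eq_add] at this
        rw [this]; abel
      have e4 : PP X (a + 1) (m + 1) n = PP X a (m + 1) (n + 1) + X (a + 1) n * PP X a m n := by
        rw [PP]
      change _ = _ - c (a + 2) n * _
      rw [e]
      have e5 : c (a + 1) (n + 1) * PP X (a + 1) (m + 1) n =
          c (a + 1) (n + 1) * PP X a (m + 1) (n + 1)
          + X (a + 2) (n + 1) * (c (a + 1) n * PP X a m n) := by
        rw [e4, mul_add, ← mul_assoc, ← e3, mul_assoc]
      rw [add_mul, sub_mul, e5, mul_sub]
      abel

theorem PP_split {R : Type*} [Ring R] (X X' : ℕ → ℤ → R)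
    (h1 : ∀ n, X' 1 n = 0) (h2 : ∀ a n, X' (a + 2) n = X (a + 2) n) (a m : ℕ) (n : ℤ) :
    PP X (a + 1) (m + 1) n = PP X' (a + 1) (m + 1) n
      + PP X' (a + 1) m n * X 1 (n + a - m) := by
  induction a generalizing m n with
  | zero =>
    cases m with
    | zero => simp [PP, h1]
    | succ m => cases m <;> simp [PP, h1]
  | succ a ih =>
    rw [PP_succ, ih m (n + 1), PP_succ X' (a + 1) m n, h2 a n]
    have e : n + 1 + (a : ℤ) - m = n + ((a + 1 : ℕ) : ℤ) - m := by push_cast; ring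
    rw [e]
    cases m with
    | zero => simp [PP_zero]; abel
    | succ m =>
      rw [ih m n, PP_succ X' (a + 1) m n, h2 a n]
      have e : n + (a : ℤ) - m = n + ((a + 1 : ℕ) : ℤ) - (m + 1 : ℕ) := by push_cast; ring
      rw [e]
      simp only [mul_add, add_mul, mul_assoc]
      abel

theorem PP_vanish {R : Type*} [Ring R] (X' : ℕ → ℤ → R)
    (h1 : ∀ n, X' 1 n = 0) (a m : ℕ) (n : ℤ) (h : a + 1 ≤ m) : PP X' (a + 1) m n = 0 := by
  induction a generalizing m n with
  | zero =>
    obtain ⟨m, rfl⟩ : ∃ k, m = k + 1 := ⟨m - 1, by omega⟩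
    simp [PP, h1]
  | succ a ih =>
    obtain ⟨m, rfl⟩ : ∃ k, m = k + 1 := ⟨m - 1, by omega⟩
    rw [PP_succ, ih _ _ (by omega), ih _ _ (by omega)]; simp

theorem PP_commute {R : Type*} [Ring R] (X' : ℕ → ℤ → R) (Y : ℤ → R) (N : ℕ)
    (h1 : ∀ n, X' 1 n = 0)
    (hc : ∀ (a : ℕ) (n k : ℤ), a + 2 ≤ N → n - a ≤ k → k ≤ n + a + 1 → Commute (X' (a + 2) n) (Y k))
    (a m : ℕ) (n k : ℤ) (ha : a ≤ N) (hk : k = n + a - m ∨ k = n + a - m - 1) :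
    Commute (PP X' a m n) (Y k) := by
  induction a generalizing m n with
  | zero => cases m <;> simp [PP]
  | succ a ih =>
    cases m with
    | zero => rw [PP_zero]; exact Commute.one_left _
    | succ m =>
      rw [PP]
      push_cast at hk
      refine Commute.add_left (ih _ _ (by omega) (by push_cast; omega)) ?_
      cases a with
      | zero => simp [h1]
      | succ a =>
        by_cases hm : a + 1 ≤ m
        · rw [PP_vanish X' h1 a m n hm]; simp
        · push_cast at hk
          exact Commute.mul_left (hc a n k (by omega) (by omega) (by omega))
            (ih _ _ (by omega) (by push_cast; omega))

theorem sort_insert_max (a : ℕ) (S : Finset ℕ) (hS : ∀ x ∈ S, x < a) :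
    ((insert a S).sort (· ≤ ·)).reverse = a :: (S.sort (· ≤ ·)).reverse := by
  have h : (insert a S).sort (· ≤ ·) = S.sort (· ≤ ·) ++ [a] := by
    have ha : a ∉ S := fun h => lt_irrefl _ (hS a h)
    apply List.Perm.eq_of_pairwise (le := (· ≤ ·))
    · intro x y _ _ h1 h2; exact le_antisymm h1 h2
    · exact Finset.pairwise_sort _ _
    · rw [List.pairwise_append]
      refine ⟨Finset.pairwise_sort _ _, by simp, ?_⟩
      intro x hx y hy
      simp at hx hy
      subst hy
      exact (hS x hx).le
    · rw [List.perm_ext_iff_of_nodup (Finset.sort_nodup _ _)]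
      · intro x; simp [or_comm]
      · rw [List.nodup_append]
        refine ⟨Finset.sort_nodup _ _, by simp, ?_⟩
        intro x hx y hy
        simp at hx hy
        subst hy
        exact (hS x hx).ne
  rw [h]; simp

/-- A term of the Miura sum. -/
def tm {R : Type*} [Ring R] (X : ℕ → ℤ → R) (n : ℤ) (l : List ℕ) : R :=
    ((l.zipIdx.map Prod.swap).map
      (fun ji => X ji.2 (n - (ji.2 : ℤ) - (ji.1 : ℤ)))).prod

theorem tm_cons {R : Type*} [Ring R] (X : ℕ → ℤ → R) (n : ℤ) (a : ℕ) (l : List ℕ) :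
    tm X n (a :: l) = X a (n - a) * tm X (n - 1) l := by
  unfold tm
  rw [List.zipIdx_cons', List.map_cons, List.map_cons, List.prod_cons]
  congr 1
  · simp
  · simp only [List.map_map]
    congr 2
    funext x
    simp only [Function.comp, Prod.swap, Prod.map]
    congr 1
    push_cast [id]
    ring

theorem sum_tm {R : Type*} [Ring R] (X : ℕ → ℤ → R) (a m : ℕ) (n : ℤ) :
    ∑ S ∈ Finset.powersetCard m (Finset.Icc 1 a), tm X (n + a) (S.sort (· ≤ ·)).reverse
      = PP X a m n := by
  induction a generalizing m n with
  | zero =>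
    cases m with
    | zero => simp [PP, tm]
    | succ m =>
      rw [Finset.powersetCard_eq_empty.2 (by simp)]; simp [PP]
  | succ a ih =>
    cases m with
    | zero => simp [PP_zero, tm]
    | succ m =>
      have hI : Finset.Icc 1 (a + 1) = insert (a + 1) (Finset.Icc 1 a) := by
        ext x; simp; omega
      have hn : a + 1 ∉ Finset.Icc 1 a := by simp
      rw [hI, Finset.powersetCard_succ_insert hn, Finset.sum_union, Finset.sum_image, PP,
        ← ih (m + 1) (n + 1), ← ih m n, Finset.mul_sum]
      · congr 1
        · refine Finset.sum_congr rfl fun S _ => ?_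
          congr 1; push_cast; ring
        · refine Finset.sum_congr rfl fun S hS => ?_
          rw [sort_insert_max, tm_cons]
          · congr 2 <;> push_cast <;> ring
          · intro x hx
            have := (Finset.mem_powersetCard.1 hS).1 hx
            simp at this; omega
      · intro S hS T hT h
        have h1 : a + 1 ∉ S := fun h => hn ((Finset.mem_powersetCard.1 hS).1 h)
        have h2 : a + 1 ∉ T := fun h => hn ((Finset.mem_powersetCard.1 hT).1 h)
        rw [← Finset.erase_insert h1, ← Finset.erase_insert h2]
        exact congrArg (fun Z => Finset.erase Z (a + 1)) h
      · rw [Finset.disjoint_left]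
        intro S hS hT
        obtain ⟨T, _, rfl⟩ := Finset.mem_image.1 hT
        exact hn ((Finset.mem_powersetCard.1 hS).1 (Finset.mem_insert_self _ _))

theorem CMiura_eq {R : Type*} [Ring R] (M Mi : ℕ → ℤ → R) (r m : ℕ) (n : ℤ) :
    CMiura M Mi r m n = PP (xv M Mi) (r + 1) m n := by
  rw [← sum_tm]
  unfold CMiura tm
  refine Finset.sum_congr rfl fun S _ => ?_
  congr 2
  funext x
  congr 1
  push_cast; ring

/-- From conservation and commutation to the Hamiltonian identity. -/
theorem PP_final {R : Type*} [Ring R] (q : R) (X : ℕ → ℤ → R) (Y : ℤ → R) (r : ℕ)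
    (hq : ∀ x, q * x = x * q)
    (hX : ∀ n, X 1 n * Y n = Y (n + 1))
    (hX2 : ∀ n, Y n * X 1 n = q * Y (n + 1))
    (hc : ∀ (a : ℕ) (n k : ℤ), a + 2 ≤ r + 1 → n - a ≤ k → k ≤ n + a + 1 → Commute (X (a + 2) n) (Y k))
    (C : ℕ → R) (hC : ∀ m n, PP X (r + 1) m n = C m) (m : ℕ) (n : ℤ) :
    C m * Y n - Y n * C m = (q - 1) * ∑ j ∈ Finset.Icc 1 m, (-1) ^ j * C (m - j) * Y (n + j) := by
  set X' : ℕ → ℤ → R := fun a n => if a = 1 then 0 else X a n with hX'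
  have h1 : ∀ n, X' 1 n = 0 := by intro n; simp [hX']
  have h2 : ∀ a n, X' (a + 2) n = X (a + 2) n := by intro a n; simp [hX']
  have hcom := PP_commute X' Y (r + 1) h1 (by intro a n k; rw [h2]; exact hc a n k)
  have hs : ∀ m k, C (m + 1) = PP X' (r + 1) (m + 1) k + PP X' (r + 1) m k * X 1 (k + r - m) := by
    intro m k; rw [← hC (m + 1) k, PP_split X X' h1 h2]
  have key : ∀ m k, ∑ j ∈ Finset.range (m + 1), (-1) ^ j * C (m - j) * Y (k + r - m + 1 + j)
      = PP X' (r + 1) m k * Y (k + r - m + 1) := by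
    intro m k
    induction m with
    | zero => simp [PP_zero, ← hC 0 k]
    | succ m ih =>
      rw [Finset.sum_range_succ']
      simp only [Nat.add_sub_add_right]
      have : ∑ j ∈ Finset.range (m + 1), (-1) ^ (j + 1) * C (m - j) *
            Y (k + r - (m + 1 : ℕ) + 1 + (j + 1 : ℕ))
          = - ∑ j ∈ Finset.range (m + 1), (-1) ^ j * C (m - j) * Y (k + r - m + 1 + j) := by
        rw [← Finset.sum_neg_distrib]
        refine Finset.sum_congr rfl fun j _ => ?_
        rw [pow_succ]
        have : k + r - (m + 1 : ℕ) + 1 + (j + 1 : ℕ) = k + r - m + 1 + (j : ℤ) := by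
          push_cast; ring
        rw [this]; simp
      rw [this, ih]
      simp only [pow_zero, one_mul, Nat.sub_zero, Nat.cast_zero, add_zero]
      rw [hs m k, add_mul, mul_assoc]
      have : k + r - (m + 1 : ℕ) + 1 = k + r - (m : ℤ) := by push_cast; ring
      rw [this, hX]; abel
  cases m with
  | zero => simp [← hC 0 0, PP_zero]
  | succ m =>
    set k : ℤ := n - r + m with hk
    have hkn : k + r - m = n := by rw [hk]; ring
    have hkey := key m k
    rw [hkn] at hkey
    have hsum : ∑ j ∈ Finset.Icc 1 (m + 1), (-1) ^ j * C (m + 1 - j) * Y (n + j)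
        = - ∑ j ∈ Finset.range (m + 1), (-1) ^ j * C (m - j) * Y (n + 1 + j) := by
      rw [← Finset.Ico_add_one_right_eq_Icc, Finset.sum_Ico_eq_sum_range, ← Finset.sum_neg_distrib]
      refine Finset.sum_congr rfl fun j _ => ?_
      have e1 : m + 1 - (1 + j) = m - j := by omega
      have e2 : n + (1 + j : ℕ) = n + 1 + (j : ℤ) := by push_cast; ring
      rw [e1, e2, pow_add]; simp
    rw [hsum, hkey, hs m k, hkn]
    have c1 : Commute (PP X' (r + 1) (m + 1) k) (Y n) :=
      hcom _ _ _ _ le_rfl (by push_cast; omega)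
    have c2 : Commute (PP X' (r + 1) m k) (Y n) :=
      hcom _ _ _ _ le_rfl (by push_cast; omega)
    rw [add_mul, mul_add, c1.eq, mul_assoc, hX, ← mul_assoc (Y n), ← c2.eq, mul_assoc, hX2,
      ← mul_assoc _ q, ← hq, sub_mul, mul_neg, one_mul, mul_assoc]
    abel

theorem grp_inv {G : Type*} [Group G] (w x y : G) (hw : ∀ g, w * g = g * w)
    (h : x * y = w * y * x) : x * y⁻¹ = w⁻¹ * y⁻¹ * x := by
  rw [mul_inv_eq_iff_eq_mul, mul_assoc, mul_assoc, h, hw y]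
  group

theorem grp_A {G : Type*} [Group G] (w W X Y Z : G) (hw : ∀ g, w * g = g * w)
    (h1 : X * Y = w * Y * X) (h2 : Z * Y = w * Y * Z) (h3 : W * Y = Y * W) :
    Y * W⁻¹ * Z⁻¹ * X * Y⁻¹ = W⁻¹ * Z⁻¹ * X := by
  have e1 : SemiconjBy Y⁻¹ X (w * X) := by
    have := grp_inv w X Y hw h1
    change _ = _
    rw [mul_assoc w, this, mul_assoc, mul_inv_cancel_left]
  have e2 : SemiconjBy Y⁻¹ Z (w * Z) := by
    have := grp_inv w Z Y hw h2
    change _ = _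
    rw [mul_assoc w, this, mul_assoc, mul_inv_cancel_left]
  have e3 : SemiconjBy Y⁻¹ W W := by
    have : Commute W Y := h3
    exact this.symm.inv_left
  have e := (e3.inv_right.mul_right e2.inv_right).mul_right e1
  have e' : W⁻¹ * (w * Z)⁻¹ * (w * X) = W⁻¹ * Z⁻¹ * X := by
    group
  rw [e'] at e
  have e4 : Y⁻¹ * (W⁻¹ * Z⁻¹ * X) = (W⁻¹ * Z⁻¹ * X) * Y⁻¹ := e
  have : Y * W⁻¹ * Z⁻¹ * X * Y⁻¹ = Y * ((W⁻¹ * Z⁻¹ * X) * Y⁻¹) := by group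
  rw [this, ← e4, mul_inv_cancel_left]

theorem grp_B {G : Type*} [Group G] (q v y A0 A1 B0 B1 : G) (hq : ∀ g, q * g = g * q)
    (hv : ∀ g, v * g = g * v)
    (h1 : y * A0 = v * A0 * y) (h2 : y * A1 = q * v * A1 * y)
    (h3 : y * B0 = v * B0 * y) (h4 : y * B1 = q * v * B1 * y) :
    (A1 * A0⁻¹ * (B0 * B1⁻¹)) * y = y * (A1 * A0⁻¹ * (B0 * B1⁻¹)) := by
  have e1 : SemiconjBy y A0 (v * A0) := h1
  have e2 : SemiconjBy y A1 (q * v * A1) := h2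
  have e3 : SemiconjBy y B0 (v * B0) := h3
  have e4 : SemiconjBy y B1 (q * v * B1) := h4
  have e := (e2.mul_right e1.inv_right).mul_right (e3.mul_right e4.inv_right)
  have e' : q * v * A1 * (v * A0)⁻¹ * (v * B0 * (q * v * B1)⁻¹) =  A1 * A0⁻¹ * (B0 * B1⁻¹) := by
    have : q * v * A1 * (v * A0)⁻¹ * (v * B0 * (q * v * B1)⁻¹)
        = (q * v) * (A1 * A0⁻¹ * (B0 * B1⁻¹)) * (q * v)⁻¹ := by group
    rw [this, mul_assoc q v, hv, ← mul_assoc q, hq]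
    group
  rw [e'] at e
  exact e.eq.symm

theorem ring_R1 {R : Type*} [Ring R] (w v a0 a1 a2 b0 b1 : Rˣ) (P : R)
    (hw : ∀ g, w * g = g * w) (hv : ∀ g, v * g = g * v)
    (hs : (w : R) * a2 * a0 = (a1 : R) ^ 2 - P * b1)
    (h0 : a0 * a1 = w * a1 * a0)
    (h1 : b0 * b1 = v * b1 * b0) (h2 : a0 * b1 = v * b1 * a0) (h3 : a1 * b1 = b1 * a1) :
    ((a1 * a0⁻¹ * (b0 * b1⁻¹) : Rˣ) : R) - P * ((a1⁻¹ * a0⁻¹ * b0 : Rˣ) : R)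
      = ((a2 * a1⁻¹ * (b0 * b1⁻¹) : Rˣ) : R) := by
  have hA := grp_A v a1 b0 b1 a0 hv h1 h2 h3
  have e1 : P * ((a1⁻¹ * a0⁻¹ * b0 : Rˣ) : R) =
      (P * b1) * ((a1⁻¹ * a0⁻¹ * (b0 * b1⁻¹) : Rˣ) : R) := by
    rw [← hA, mul_assoc P, ← Units.val_mul]
    congr 2
    group
  have e2 : ((a1 * a0⁻¹ * (b0 * b1⁻¹) : Rˣ) : R) =
      (a1 : R) ^ 2 * ((a1⁻¹ * a0⁻¹ * (b0 * b1⁻¹) : Rˣ) : R) := by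
    rw [← Units.val_pow_eq_pow_val, ← Units.val_mul]
    congr 1
    group
  rw [e1, e2, ← sub_mul, ← hs, ← Units.val_mul, ← Units.val_mul, ← Units.val_mul]
  congr 1
  have e3 := grp_inv w a0 a1 hw h0
  have e4 : w * a2 * a0 * (a1⁻¹ * a0⁻¹ * (b0 * b1⁻¹))
     = w * a2 * (a0 * a1⁻¹) * a0⁻¹ * (b0 * b1⁻¹) := by group
  rw [e4, e3, hw a2]
  group

theorem ring_R1' {R : Type*} [Ring R] (w a0 a1 a2 d1 d2 e1 : Rˣ)
    (hw : ∀ g, w * g = g * w)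
    (hs : (w : R) * a2 * a0 = (a1 : R) ^ 2 - d1 * e1)
    (h0 : a1 * a2 = w * a2 * a1)
    (h1 : d1 * a2 = w * a2 * d1) (h2 : a1 * e1 = e1 * a1) :
    ((d2 * d1⁻¹ * (a1 * a2⁻¹) : Rˣ) : R) - d2 * ((a2⁻¹ * a1⁻¹ * e1 : Rˣ) : R)
      = ((d2 * d1⁻¹ * (a0 * a1⁻¹) : Rˣ) : R) := by
  have k1 := grp_inv w a1 a2 hw h0
  have k2 := grp_inv w d1 a2 hw h1
  have hc : Commute a1 e1 := h2
  have g1 : d2 * d1⁻¹ * (a1 * a2⁻¹) = (d2 * d1⁻¹ * w⁻¹ * a2⁻¹) * a1 ^ 2 * a1⁻¹ := by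
    rw [k1]; group
  have g2 : d2 * (a2⁻¹ * a1⁻¹ * e1) = (d2 * d1⁻¹ * w⁻¹ * a2⁻¹) * (d1 * e1) * a1⁻¹ := by
    have : (d2 * d1⁻¹ * w⁻¹ * a2⁻¹) * (d1 * e1) * a1⁻¹
      = (d2 * d1⁻¹) * (w⁻¹ * a2⁻¹ * d1) * (e1 * a1⁻¹) := by group
    rw [this, ← k2, ← (hc.inv_left).eq]; group
  have g3 : d2 * d1⁻¹ * (a0 * a1⁻¹) = (d2 * d1⁻¹ * w⁻¹ * a2⁻¹) * (w * a2 * a0) * a1⁻¹ := by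
    rw [hw a2]; group
  rw [← Units.val_mul, g1, g2, g3]
  rw [Units.val_mul _ a1⁻¹, Units.val_mul _ a1⁻¹, Units.val_mul _ a1⁻¹, ← sub_mul,
    Units.val_mul _ (a1 ^ 2), Units.val_mul _ (d1 * e1), Units.val_mul _ (w * a2 * a0), ← mul_sub]
  congr 2
  push_cast
  exact hs.symm

theorem grp_R2 {G : Type*} [Group G] (w v a0 a1 a2 d1 d2 e0 e1 : G)
    (hw : ∀ g, w * g = g * w) (hv : ∀ g, v * g = g * v)
    (h0 : a1 * a2 = w * a2 * a1) (h1 : d1 * a2 = w * a2 * d1) (h3 : a1 * d1 = d1 * a1)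
    (h4 : e0 * e1 = v * e1 * e0) (h5 : a0 * e1 = v * e1 * a0) (h2 : a1 * e1 = e1 * a1) :
    d2 * d1⁻¹ * (a1 * a2⁻¹) * (d1 * (a1⁻¹ * a0⁻¹ * e0))
      = d2 * (a2⁻¹ * a1⁻¹ * e1) * (a1 * a0⁻¹ * (e0 * e1⁻¹)) := by
  have k1 := grp_inv w a1 a2 hw h0
  have k2 := grp_inv w d1 a2 hw h1
  have hA := grp_A v 1 e0 e1 a0 hv h4 h5 (by simp)
  have L : d2 * d1⁻¹ * (a1 * a2⁻¹) * (d1 * (a1⁻¹ * a0⁻¹ * e0))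
      = d2 * a2⁻¹ * a0⁻¹ * e0 := by
    have t1 : d2 * d1⁻¹ * (a1 * a2⁻¹) * (d1 * (a1⁻¹ * a0⁻¹ * e0)) =
      d2 * d1⁻¹ * (w⁻¹ * a2⁻¹) * (a1 * d1) * (a1⁻¹ * a0⁻¹ * e0) := by rw [k1]; group
    have t2 : d2 * d1⁻¹ * (w⁻¹ * a2⁻¹) * (d1 * a1) * (a1⁻¹ * a0⁻¹ * e0) =
      d2 * d1⁻¹ * (w⁻¹ * a2⁻¹ * d1) * (a0⁻¹ * e0) := by group
    rw [t1, h3, t2, ← k2]; group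
  have Rr : d2 * (a2⁻¹ * a1⁻¹ * e1) * (a1 * a0⁻¹ * (e0 * e1⁻¹))
      = d2 * a2⁻¹ * (e1 * 1⁻¹ * a0⁻¹ * e0 * e1⁻¹) := by
    have t1 : d2 * (a2⁻¹ * a1⁻¹ * e1) * (a1 * a0⁻¹ * (e0 * e1⁻¹))
      = d2 * (a2⁻¹ * a1⁻¹) * (e1 * a1) * a0⁻¹ * (e0 * e1⁻¹) := by group
    rw [t1, ← h2]; group
  rw [L, Rr, hA]; group

theorem quantum_Q_conserved_Hamiltonians
    {R : Type*} [Ring R] (q A Δ : Rˣ)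
    (hq : ∀ x : R, (q : R) * x = x * (q : R))
    (r : ℕ) (hr : 1 ≤ r)
    (M Mi : ℕ → ℤ → R)
    (hM0 : ∀ n : ℤ, M 0 n = 1)
    (hMtop : ∀ n : ℤ, M (r + 2) n = 0)
    (hMiL : ∀ (α : ℕ) (n : ℤ), α ≤ r + 1 → M α n * Mi α n = 1)
    (hMiR : ∀ (α : ℕ) (n : ℤ), α ≤ r + 1 → Mi α n * M α n = 1)
    (hMsys : ∀ (α : ℕ) (n : ℤ), 1 ≤ α → α ≤ r + 1 →
      (q : R) ^ α * M α (n + 1) * M α (n - 1) = M α n ^ 2 - M (α + 1) n * M (α - 1) n)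
    (hcom : ∀ (α β ε : ℕ) (n : ℤ), ε ≤ 1 → α ≤ r + 1 → β ≤ r + 1 →
      M α n * M β (n + (ε : ℤ)) = (q : R) ^ (ε * min α β) * M β (n + (ε : ℤ)) * M α n)
    (hAΔ : ∀ n : ℤ, M (r + 1) n = ((A ^ n : Rˣ) : R) * (Δ : R))
    (hΔM : ∀ (α : ℕ) (n : ℤ), 1 ≤ α → α ≤ r + 1 →
      (Δ : R) * M α n = ((q ^ ((α : ℤ) * n) : Rˣ) : R) * M α n * (Δ : R))
    (hAM : ∀ (α : ℕ) (n : ℤ), 1 ≤ α → α ≤ r + 1 →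
      (A : R) * M α n = ((q ^ (-(α : ℤ)) : Rˣ) : R) * M α n * (A : R))
    (hΔA : (Δ : R) * (A : R) = (q : R) ^ (r + 1) * (A : R) * (Δ : R))
    (hext : ∀ (α β : ℕ) (n p : ℤ), α ≤ r + 1 → β ≤ r + 1 →
      |p| ≤ |(β : ℤ) - (α : ℤ)| + 1 →
      M α n * M β (n + p) = ((q ^ (p * ((min α β : ℕ) : ℤ)) : Rˣ) : R) * M β (n + p) * M α n) :
    ∀ (m : ℕ) (n : ℤ), 1 ≤ m → m ≤ r →
      CMiura M Mi r m 0 * M 1 n - M 1 n * CMiura M Mi r m 0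
        = ((q : R) - 1) *
            ∑ j ∈ Finset.Icc 1 m, (-1 : R) ^ j * CMiura M Mi r (m - j) 0 * M 1 (n + (j : ℤ)) := by
  have hMU : ∀ α n, α ≤ r + 1 → ∃ u : Rˣ, (u : R) = M α n ∧ ((u⁻¹ : Rˣ) : R) = Mi α n :=
    fun α n h => ⟨⟨M α n, Mi α n, hMiL α n h, hMiR α n h⟩, rfl, rfl⟩
  obtain ⟨U, hU⟩ : ∃ U : ℕ → ℤ → Rˣ, ∀ α n, α ≤ r + 1 →
      ((U α n : Rˣ) : R) = M α n ∧ (((U α n)⁻¹ : Rˣ) : R) = Mi α n := by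
    classical
    refine ⟨fun α n => if h : α ≤ r + 1 then (hMU α n h).choose else 1, fun α n h => ?_⟩
    simp only [h, dif_pos]
    exact (hMU α n h).choose_spec
  have hqU : ∀ g : Rˣ, q * g = g * q := fun g => Units.ext (by push_cast; exact hq g)
  have hqz : ∀ (i : ℤ) (g : Rˣ), q ^ i * g = g * q ^ i := fun i g =>
    ((show Commute q g from hqU g).zpow_left i).eq
  have hE : ∀ (α β : ℕ) (n n' : ℤ) (w : ℤ), α ≤ r + 1 → β ≤ r + 1 →
      |n' - n| ≤ |(β : ℤ) - (α : ℤ)| + 1 → w = (n' - n) * ((min α β : ℕ) : ℤ) →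
      U α n * U β n' = q ^ w * U β n' * U α n := by
    intro α β n n' w h1 h2 h3 h4
    have := hext α β n (n' - n) h1 h2 h3
    rw [add_sub_cancel, ← h4] at this
    apply Units.ext
    push_cast
    rw [(hU α n h1).1, (hU β n' h2).1, this]
  have hE0 : ∀ (α β : ℕ) (n : ℤ), α ≤ r + 1 → β ≤ r + 1 →
      U α n * U β n = U β n * U α n := by
    intro α β n h1 h2
    have := hE α β n n 0 h1 h2 (by simp; positivity) (by simp)
    simpa using this
  have hx : ∀ a n, a ≤ r → xv M Mi (a + 1) n =
      ((U (a + 1) (n + 1) * (U (a + 1) n)⁻¹ * (U a n * (U a (n + 1))⁻¹) : Rˣ) : R) := by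
    intro a n ha
    unfold xv xiv xivInv
    push_cast
    rw [(hU (a + 1) (n + 1) (by omega)).1, (hU (a + 1) n (by omega)).2, (hU a n (by omega)).1,
      (hU a (n + 1) (by omega)).2]
  have hU0 : ∀ n, U 0 n = 1 := fun n => Units.ext (by rw [(hU 0 n (by omega)).1, hM0]; rfl)
  set c : ℕ → ℤ → R := fun α n =>
    M (α + 1) (n + 1) * (((U α (n + 1))⁻¹ * (U α n)⁻¹ * U (α - 1) n : Rˣ) : R) with hc
  have hms : ∀ (a : ℕ) (n n1 n2 : ℤ), a ≤ r → n1 = n + 1 → n2 = n + 1 + 1 →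
      ((q ^ ((a : ℤ) + 1) : Rˣ) : R) * (U (a + 1) n2 : R) * (U (a + 1) n : R)
      = (U (a + 1) n1 : R) ^ 2 - M (a + 2) n1 * (U a n1 : R) := by
    intro a n n1 n2 ha e1 e2
    subst e1 e2
    have := hMsys (a + 1) (n + 1) (by omega) (by omega)
    rw [add_sub_cancel_right, add_tsub_cancel_right] at this
    rw [(hU (a + 1) (n + 1 + 1) (by omega)).1, (hU (a + 1) n (by omega)).1,
      (hU (a + 1) (n + 1) (by omega)).1, (hU a (n + 1) (by omega)).1, ← this]
    congr 2
  have R1 : ∀ a n, a ≤ r → xv M Mi (a + 1) n - c (a + 1) n =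
      ((U (a + 1) (n + 1 + 1) * (U (a + 1) (n + 1))⁻¹ * (U a n * (U a (n + 1))⁻¹) : Rˣ) : R) := by
    intro a n ha
    rw [hx a n ha, hc]
    refine ring_R1 (q ^ ((a : ℤ) + 1)) (q ^ (a : ℤ)) _ _ _ _ _ _ (hqz _) (hqz _)
      (hms a n (n + 1) (n + 1 + 1) ha rfl rfl) ?_ ?_ ?_ ?_
    · exact hE _ _ _ _ _ (by omega) (by omega) (by simp) (by simp)
    · exact hE _ _ _ _ _ (by omega) (by omega) (by simp) (by simp)
    · exact hE _ _ _ _ _ (by omega) (by omega) (by simp) (by simp)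
    · exact hE0 _ _ _ (by omega) (by omega)
  have R1' : ∀ a n, a + 1 ≤ r → xv M Mi (a + 2) (n + 1) - c (a + 1) (n + 1) =
      ((U (a + 2) (n + 1 + 1) * (U (a + 2) (n + 1))⁻¹ *
        (U (a + 1) n * (U (a + 1) (n + 1))⁻¹) : Rˣ) : R) := by
    intro a n ha
    rw [hx (a + 1) (n + 1) ha, hc]
    have hs := hms a n (n + 1) (n + 1 + 1) (by omega) rfl rfl
    rw [← (hU (a + 2) (n + 1) (by omega)).1] at hs
    simp only [add_tsub_cancel_right]
    change _ - M (a + 2) (n + 1 + 1) * _ = _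
    rw [← (hU (a + 2) (n + 1 + 1) (by omega)).1]
    refine ring_R1' (q ^ ((a : ℤ) + 1)) _ _ _ _ _ _ (hqz _) hs ?_ ?_ ?_
    · exact hE _ _ _ _ _ (by omega) (by omega) (by simp) (by simp)
    · exact hE _ _ _ _ _ (by omega) (by omega) (by simp) (by simp)
    · exact hE0 _ _ _ (by omega) (by omega)
  have R2 : ∀ a n, a + 1 ≤ r → xv M Mi (a + 2) (n + 1) * c (a + 1) n =
      c (a + 1) (n + 1) * xv M Mi (a + 1) n := by
    intro a n ha
    rw [hx (a + 1) (n + 1) ha, hx a n (by omega), hc]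
    simp only [add_tsub_cancel_right]
    change _ * (M (a + 2) (n + 1) * _) = M (a + 2) (n + 1 + 1) * _ * _
    rw [← (hU (a + 2) (n + 1 + 1) (by omega)).1, ← (hU (a + 2) (n + 1) (by omega)).1]
    have : ∀ {u v : Rˣ}, u = v → (u : R) = v := fun h => congrArg _ h
    simp only [← Units.val_mul]
    refine this (grp_R2 (q ^ ((a : ℤ) + 1)) (q ^ (a : ℤ)) _ _ _ _ _ _ _ (hqz _) (hqz _)
      ?_ ?_ ?_ ?_ ?_ ?_)
    · exact hE _ _ _ _ _ (by omega) (by omega) (by simp) (by simp)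
    · exact hE _ _ _ _ _ (by omega) (by omega) (by simp) (by simp)
    · exact hE0 _ _ _ (by omega) (by omega)
    · exact hE _ _ _ _ _ (by omega) (by omega) (by simp) (by simp)
    · exact hE _ _ _ _ _ (by omega) (by omega) (by simp) (by simp)
    · exact hE0 _ _ _ (by omega) (by omega)
  have hcons : ∀ m n, PP (xv M Mi) (r + 1) m (n + 1) = PP (xv M Mi) (r + 1) m n := by
    intro m n
    cases m with
    | zero => rw [PP_zero, PP_zero]
    | succ m =>
      rw [PP_conserved (xv M Mi) c (r + 1) ?_ ?_ ?_ r m n le_rfl]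
      · have : c (r + 1) n = 0 := by
          rw [hc]
          change M (r + 2) (n + 1) * _ = 0
          rw [hMtop, zero_mul]
        rw [this]; simp
      · intro n
        rw [R1 0 n (by omega), hx 0 (n + 1) (by omega)]
        simp [hU0]
      · intro a n ha
        rw [R1 (a + 1) n (by omega), R1' a n (by omega)]
      · intro a n ha
        exact R2 a n (by omega)
  have hC : ∀ m n, PP (xv M Mi) (r + 1) m n = CMiura M Mi r m 0 := by
    intro m n
    rw [CMiura_eq]
    induction n using Int.induction_on with
    | zero => rfl
    | succ i ih => rw [hcons, ih]
    | pred i ih => rw [← ih, ← hcons]; congr 1; ring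
  have hx1 : ∀ n, xv M Mi 1 n = ((U 1 (n + 1) * (U 1 n)⁻¹ : Rˣ) : R) := by
    intro n
    rw [hx 0 n (by omega)]
    simp [hU0]
  intro m n _ _
  refine PP_final (q : R) (xv M Mi) (M 1) r hq ?_ ?_ ?_ _ hC m n
  · intro n
    rw [hx1, ← (hU 1 n (by omega)).1, ← (hU 1 (n + 1) (by omega)).1, ← Units.val_mul]
    simp
  · intro n
    rw [hx1, ← (hU 1 n (by omega)).1, ← (hU 1 (n + 1) (by omega)).1, ← Units.val_mul,
      ← Units.val_mul, ← mul_assoc, hE 1 1 n (n + 1) 1 (by omega) (by omega) (by simp) (by simp)]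
    simp
  · intro a n k ha h1 h2
    rw [hx (a + 1) n (by omega), ← (hU 1 k (by omega)).1]
    have : ∀ {u v : Rˣ}, u = v → (u : R) = v := fun h => congrArg _ h
    change _ * _ = _ * _
    simp only [← Units.val_mul]
    have hp : q * q ^ (n - k) = q ^ (n + 1 - k) := by
      rw [← zpow_one_add]; congr 1; ring
    refine this (grp_B q (q ^ (n - k)) _ _ _ _ _ hqU (hqz _) ?_ ?_ ?_ ?_)
    · refine hE _ _ _ _ _ (by omega) (by omega) ?_ (by simp)
      rw [abs_le]; push_cast; rw [abs_of_nonneg (by omega)]; omega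
    · rw [hp]
      refine hE _ _ _ _ _ (by omega) (by omega) ?_ (by simp)
      rw [abs_le]; push_cast; rw [abs_of_nonneg (by omega)]; omega
    · refine hE _ _ _ _ _ (by omega) (by omega) ?_ (by simp)
      rw [abs_le]; push_cast; rw [abs_of_nonneg (by omega)]; omega
    · rw [hp]
      refine hE _ _ _ _ _ (by omega) (by omega) ?_ (by simp)
      rw [abs_le]; push_cast; rw [abs_of_nonneg (by omega)]; omega
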